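/- arXiv:0807.2648 — 2 statements merged into one kernel-verified Lean document; each statement's English description precedes it below -/
import Mathlib

section
/- For a double-integrator robot with speed bound v_max > 0 and acceleration bound u_max > 0, starting from any configuration g = (p, v) ∈ ℝ² × ℝ² with ‖v‖ = v₀ satisfying 0 < v₀ ≤ v_max, the area of the small-time reachable set satisfies liminf_{t→0⁺} Area(R_t(g)) / t³ ≥ v₀ u_max / 3. -/
open MeasureTheory Filter Topology Real

noncomputable section

/-- The plane `ℝ²` with the Euclidean norm. -/
abbrev Plane : Type := EuclideanSpace ℝ (Fin 2)

/-- A double-integrator (DI) trajectory with speed bound `vmax` and acceleration bound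
`umax`: a twice continuously differentiable curve in the plane whose velocity and
acceleration are bounded by `vmax` and `umax` respectively. -/
def IsDITraj (vmax umax : ℝ) (x : ℝ → Plane) : Prop :=
  ContDiff ℝ 2 x ∧ (∀ t, ‖deriv x t‖ ≤ vmax) ∧ (∀ t, ‖deriv (deriv x) t‖ ≤ umax)

/-- Minimum travel time of a DI robot from configuration `(p, v)` to the point `q`. -/
def tauDI (vmax umax : ℝ) (p v q : Plane) : ℝ :=
  sInf {T : ℝ | 0 ≤ T ∧ ∃ x : ℝ → Plane, IsDITraj vmax umax x ∧
    x 0 = p ∧ deriv x 0 = v ∧ x T = q}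

/-- Reachable set at time `t` of a DI robot starting at configuration `(p, v)`. -/
def reachDI (vmax umax : ℝ) (p v : Plane) (t : ℝ) : Set Plane :=
  {q | tauDI vmax umax p v q ≤ t}

/- A robot that keeps its speed `V = ‖v‖` and turns at a constant rate moves on a circle tangent to
`v`. Put `p` at `0` and let `v` point along the positive real axis of `ℂ`. The arc ending at `z`,
`0 < z.re`, has curvature `2 |z.im| / ‖z‖ ^ 2` and length at most `‖z‖ ^ 2 / z.re`, so `z` is
reached within time `t` as soon as `2 V ^ 2 |z.im| ≤ umax ‖z‖ ^ 2` and `‖z‖ ^ 2 ≤ V t z.re`. With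
`k = umax / (2 V ^ 2)`, both conditions hold on a cusp `|z.im| < k z.re ^ 2`, `0 < z.re ≤ a` whose
length `a` is asymptotic to `V t` as `t → 0`; its area `2 k a ^ 3 / 3` is then asymptotic to
`V umax t ^ 3 / 3`. -/

section Sinc

lemma mul_sinc (x : ℝ) : x * sinc x = sin x := by
  rcases eq_or_ne x 0 with rfl | hx
  · simp
  · rw [sinc_of_ne_zero hx, mul_div_cancel₀ _ hx]

lemma sinc_abs (x : ℝ) : sinc |x| = sinc x := by
  rcases abs_choice x with h | h <;> simp [h]

lemma sinc_pos {x : ℝ} (hx : |x| < π) : 0 < sinc x := by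
  rcases eq_or_ne x 0 with rfl | hx₀
  · simp
  · have habs : 0 < |x| := abs_pos.2 hx₀
    rw [← sinc_abs, sinc_of_ne_zero habs.ne']
    exact div_pos (sin_pos_of_pos_of_lt_pi habs hx) habs

lemma mul_cos_le_sin {x : ℝ} (hx₀ : 0 ≤ x) (hx : x ≤ π) : x * cos x ≤ sin x := by
  rcases lt_or_ge x (π / 2) with hlt | hge
  · have hcos : 0 < cos x := cos_pos_of_mem_Ioo ⟨by linarith [pi_pos], hlt⟩
    rw [← le_div_iff₀ hcos, ← tan_eq_sin_div_cos]
    exact le_tan hx₀ hlt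
  · calc x * cos x ≤ 0 :=
          mul_nonpos_of_nonneg_of_nonpos hx₀ (cos_nonpos_of_pi_div_two_le_of_le hge (by linarith))
      _ ≤ sin x := sin_nonneg_of_nonneg_of_le_pi hx₀ hx

lemma cos_le_sinc {x : ℝ} (hx : |x| ≤ π) : cos x ≤ sinc x := by
  rcases eq_or_ne x 0 with rfl | hx₀
  · simp
  · have habs : 0 < |x| := abs_pos.2 hx₀
    rw [← cos_abs, ← sinc_abs, sinc_of_ne_zero habs.ne', le_div_iff₀ habs, mul_comm]
    exact mul_cos_le_sin habs.le hx

end Sinc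

lemma exists_complex_linearIsometryEquiv_norm_eq {E : Type*} [NormedAddCommGroup E]
    [InnerProductSpace ℝ E] (hE : Module.finrank ℝ E = 2) (v : E) :
    ∃ L : ℂ ≃ₗᵢ[ℝ] E, L ‖v‖ = v := by
  have : FiniteDimensional ℝ E := .of_finrank_eq_succ hE
  let e : ℂ ≃ₗᵢ[ℝ] E :=
    Complex.isometryOfOrthonormal ((stdOrthonormalBasis ℝ E).reindex (finCongr hE))
  refine ⟨(rotation (Circle.exp (e.symm v).arg)).trans e, ?_⟩
  have hpolar : Complex.exp ((e.symm v).arg * Complex.I) * ‖v‖ = e.symm v := by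
    rw [← e.symm.norm_map v, mul_comm, Complex.norm_mul_exp_arg_mul_I]
  rw [LinearIsometryEquiv.trans_apply, rotation_apply, Circle.coe_exp, hpolar, e.apply_symm_apply]

lemma volume_image_add_linearIsometryEquiv {E F : Type*} [NormedAddCommGroup E]
    [InnerProductSpace ℝ E] [FiniteDimensional ℝ E] [MeasurableSpace E] [BorelSpace E]
    [NormedAddCommGroup F] [InnerProductSpace ℝ F] [FiniteDimensional ℝ F] [MeasurableSpace F]
    [BorelSpace F] (p : F) (L : E ≃ₗᵢ[ℝ] F) (s : Set E) :
    volume ((fun z ↦ p + L z) '' s) = volume s := by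
  rw [← Set.image_image (p + ·) L, Set.image_add_left, measure_preimage_add,
    L.image_eq_preimage_symm]
  exact L.symm.measurePreserving.measure_preimage_emb
    L.symm.toMeasurableEquiv.measurableEmbedding s

section CircularArc

lemma exp_two_mul_mul_I_sub_one (z : ℂ) :
    Complex.exp (2 * z * Complex.I) - 1 =
      2 * Complex.sin z * Complex.I * Complex.exp (z * Complex.I) := by
  rw [Complex.exp_mul_I, Complex.exp_mul_I, Complex.cos_two_mul, Complex.sin_two_mul]
  linear_combination 2 * Complex.sin_sq_add_cos_sq z - 2 * Complex.sin z ^ 2 * Complex.I_sq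

/-- The plane curve that starts at `0` in the direction of the positive real axis and is traversed
with speed `V` and turning rate `ω`: an arc of a circle, or a line segment if `ω = 0`. -/
def circularArc (V ω τ : ℝ) : ℂ :=
  ∫ σ in (0 : ℝ)..τ, V * Complex.exp ((ω * σ : ℝ) * Complex.I)

@[simp]
lemma circularArc_zero_right (V ω : ℝ) : circularArc V ω 0 = 0 :=
  intervalIntegral.integral_same

lemma hasDerivAt_circularArc (V ω τ : ℝ) :
    HasDerivAt (circularArc V ω) (V * Complex.exp ((ω * τ : ℝ) * Complex.I)) τ :=
  Continuous.integral_hasStrictDerivAt (by fun_prop) 0 τ |>.hasDerivAt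

/-- By the tangent-chord theorem, the chord makes half the turning angle with the initial
direction; this is the angle `ω * τ / 2`. -/
lemma circularArc_eq_sinc_mul_exp (V ω τ : ℝ) :
    circularArc V ω τ =
      (V * τ * sinc (ω * τ / 2) : ℝ) * Complex.exp ((ω * τ / 2 : ℝ) * Complex.I) := by
  rcases eq_or_ne ω 0 with rfl | hω
  · simp [circularArc, mul_comm]
  set φ := ω * τ / 2 with hφ
  have hωI : (ω * Complex.I : ℂ) ≠ 0 := by simpa using hω
  have hsinc : V * τ * sinc φ * ω = V * (2 * sin φ) := by
    rw [← mul_sinc, hφ]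
    ring
  have hangle : (ω * Complex.I * τ : ℂ) = 2 * φ * Complex.I := by
    rw [hφ]
    push_cast
    ring
  calc circularArc V ω τ
      = V * ∫ σ in (0 : ℝ)..τ, Complex.exp (ω * Complex.I * σ) := by
        simp only [circularArc, intervalIntegral.integral_const_mul]
        push_cast
        simp only [mul_right_comm]
    _ = V * ((Complex.exp (ω * Complex.I * τ) - 1) / (ω * Complex.I)) := by
        simp [integral_exp_mul_complex hωI]
    _ = (V * (2 * sin φ) : ℝ) * Complex.I * Complex.exp (φ * Complex.I) / (ω * Complex.I) := by
        rw [hangle, exp_two_mul_mul_I_sub_one]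
        push_cast
        ring
    _ = (V * τ * sinc φ : ℝ) * Complex.exp (φ * Complex.I) := by
        rw [← hsinc, div_eq_iff hωI]
        push_cast
        ring

lemma exists_circularArc_eq {V : ℝ} (hV : 0 < V) {z : ℂ} (hz : z ∈ Complex.slitPlane) :
    ∃ s, 0 ≤ s ∧ V * s * z.re ≤ ‖z‖ ^ 2 ∧ circularArc V (2 * V * z.im / ‖z‖ ^ 2) s = z := by
  have hnorm : 0 < ‖z‖ := norm_pos_iff.2 (Complex.slitPlane_ne_zero hz)
  have harg : |z.arg| < π := (Complex.abs_arg_le_pi z).lt_of_ne <| by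
    rw [ne_eq, abs_eq pi_pos.le, not_or]
    exact ⟨Complex.slitPlane_arg_ne_pi hz, (Complex.neg_pi_lt_arg z).ne'⟩
  have hsinc : 0 < sinc z.arg := sinc_pos harg
  have hlength : V * (‖z‖ / (V * sinc z.arg)) * sinc z.arg = ‖z‖ := by field_simp
  have hangle : 2 * V * z.im / ‖z‖ ^ 2 * (‖z‖ / (V * sinc z.arg)) / 2 = z.arg := by
    rw [← Complex.norm_mul_sin_arg, ← mul_sinc]
    field_simp
  refine ⟨‖z‖ / (V * sinc z.arg), by positivity, ?_, ?_⟩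
  · calc V * (‖z‖ / (V * sinc z.arg)) * z.re
        = V * (‖z‖ / (V * sinc z.arg)) * (‖z‖ * cos z.arg) := by rw [Complex.norm_mul_cos_arg]
      _ ≤ V * (‖z‖ / (V * sinc z.arg)) * (‖z‖ * sinc z.arg) := by
          gcongr
          exact cos_le_sinc harg.le
      _ = ‖z‖ ^ 2 := by field_simp
  · rw [circularArc_eq_sinc_mul_exp, hangle, hlength, Complex.norm_mul_exp_arg_mul_I]

end CircularArc

section ParabolicCusp

/-- The region enclosed by the parabolas `y = ± k x ^ 2` over `0 < x ≤ a`, which are tangent to each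
other at `0`. -/
def parabolicCusp (k a : ℝ) : Set ℂ :=
  {z | z.re ∈ Set.Ioc 0 a ∧ |z.im| < k * z.re ^ 2}

variable {k a : ℝ}

lemma volume_parabolicCusp (hk : 0 ≤ k) (ha : 0 ≤ a) :
    volume (parabolicCusp k a) = ENNReal.ofReal (2 * k * a ^ 3 / 3) := by
  have hcusp : parabolicCusp k a = Complex.measurableEquivRealProd ⁻¹'
      regionBetween (fun x ↦ -(k * x ^ 2)) (fun x ↦ k * x ^ 2) (Set.Ioc 0 a) := by
    ext z
    simp [parabolicCusp, regionBetween, abs_lt]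
  have hbounds : ∀ x ∈ Set.Ioc 0 a, -(k * x ^ 2) ≤ k * x ^ 2 :=
    fun x _ ↦ neg_le_self (by positivity)
  have hint : IntegrableOn (fun x : ℝ ↦ k * x ^ 2) (Set.Ioc 0 a) :=
    (by fun_prop : Continuous fun x : ℝ ↦ k * x ^ 2).integrableOn_Ioc
  have hint_neg : IntegrableOn (fun x : ℝ ↦ -(k * x ^ 2)) (Set.Ioc 0 a) := hint.neg
  have harea : ∫ x in (0 : ℝ)..a, (k * x ^ 2 - -(k * x ^ 2)) = 2 * k * a ^ 3 / 3 := by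
    simp only [sub_neg_eq_add, ← two_mul, intervalIntegral.integral_const_mul, integral_pow]
    ring
  rw [hcusp, Complex.volume_preserving_equiv_real_prod.measure_preimage_equiv,
    Measure.volume_eq_prod,
    volume_regionBetween_eq_integral hint_neg hint measurableSet_Ioc hbounds,
    ← intervalIntegral.integral_of_le ha]
  exact congrArg ENNReal.ofReal harea

end ParabolicCusp

section Reachability

variable {vmax umax : ℝ}

lemma IsDITraj.of_hasDerivAt {x w a : ℝ → Plane} (hx : ∀ τ, HasDerivAt x (w τ) τ)
    (hw : ∀ τ, HasDerivAt w (a τ) τ) (ha : Continuous a) (hw_le : ∀ τ, ‖w τ‖ ≤ vmax)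
    (ha_le : ∀ τ, ‖a τ‖ ≤ umax) : IsDITraj vmax umax x := by
  have hdx : deriv x = w := funext fun τ ↦ (hx τ).deriv
  have hdw : deriv w = a := funext fun τ ↦ (hw τ).deriv
  have hw_smooth : ContDiff ℝ 1 w := by
    rw [contDiff_one_iff_deriv, hdw]
    exact ⟨fun τ ↦ (hw τ).differentiableAt, ha⟩
  have hx_smooth : ContDiff ℝ (1 + 1) x := by
    rw [contDiff_succ_iff_deriv, hdx]
    exact ⟨fun τ ↦ (hx τ).differentiableAt, by simp, hw_smooth⟩
  exact ⟨by simpa [one_add_one_eq_two] using hx_smooth, by rwa [hdx], by rwa [hdx, hdw]⟩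

lemma IsDITraj.mem_reachDI {x : ℝ → Plane} (hx : IsDITraj vmax umax x) {s t : ℝ} (hs : 0 ≤ s)
    (hst : s ≤ t) : x s ∈ reachDI vmax umax (x 0) (deriv x 0) t := by
  have htau : tauDI vmax umax (x 0) (deriv x 0) (x s) ≤ s :=
    csInf_le ⟨0, fun _ hT ↦ hT.1⟩ ⟨hs, x, hx, rfl, rfl, rfl⟩
  exact htau.trans hst

variable {V ω t : ℝ} (p : Plane) (L : ℂ ≃ₗᵢ[ℝ] Plane)

lemma hasDerivAt_add_circularArc (τ : ℝ) :
    HasDerivAt (fun τ ↦ p + L (circularArc V ω τ))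
      (L (V * Complex.exp ((ω * τ : ℝ) * Complex.I))) τ :=
  (L.toContinuousLinearEquiv.hasFDerivAt.comp_hasDerivAt τ
    (hasDerivAt_circularArc V ω τ)).const_add p

lemma isDITraj_add_circularArc (hspeed : |V| ≤ vmax) (hacc : |V * ω| ≤ umax) :
    IsDITraj vmax umax fun τ ↦ p + L (circularArc V ω τ) := by
  have hvel (τ : ℝ) : HasDerivAt (fun τ : ℝ ↦ L (V * Complex.exp ((ω * τ : ℝ) * Complex.I)))
      (L (V * (Complex.exp ((ω * τ : ℝ) * Complex.I) * (ω * Complex.I)))) τ := by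
    have hangle : HasDerivAt (fun τ : ℝ ↦ ((ω * τ : ℝ) : ℂ)) ω τ := by
      simpa using ((hasDerivAt_id τ).const_mul ω).ofReal_comp
    exact L.toContinuousLinearEquiv.hasFDerivAt.comp_hasDerivAt τ
      ((hangle.mul_const Complex.I).cexp.const_mul (V : ℂ))
  refine .of_hasDerivAt (hasDerivAt_add_circularArc p L) hvel ?_ ?_ ?_
  · exact L.continuous.comp (by fun_prop)
  · intro τ
    rwa [L.norm_map, norm_mul, Complex.norm_exp_ofReal_mul_I, mul_one, Complex.norm_real]
  · intro τ
    rw [L.norm_map, norm_mul, norm_mul, Complex.norm_exp_ofReal_mul_I, one_mul, norm_mul,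
      Complex.norm_I, mul_one, Complex.norm_real, Complex.norm_real, ← norm_mul]
    exact hacc

lemma add_map_mem_reachDI (hV : 0 < V) (hspeed : V ≤ vmax) {z : ℂ} (hz : 0 < z.re)
    (hturn : 2 * V ^ 2 * |z.im| ≤ umax * ‖z‖ ^ 2) (htime : ‖z‖ ^ 2 ≤ V * t * z.re) :
    p + L z ∈ reachDI vmax umax p (L V) t := by
  obtain ⟨s, hs, hs_le, hsz⟩ := exists_circularArc_eq hV (z := z) (.inl hz)
  have hst : s ≤ t := by
    rw [← mul_le_mul_iff_right₀ (mul_pos hV hz)]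
    linarith
  have hnorm : 0 < ‖z‖ ^ 2 := by
    rw [Complex.sq_norm, Complex.normSq_pos]
    exact fun h ↦ hz.ne' (by simp [h])
  have hacc : |V * (2 * V * z.im / ‖z‖ ^ 2)| ≤ umax := by
    rw [show V * (2 * V * z.im / ‖z‖ ^ 2) = 2 * V ^ 2 * z.im / ‖z‖ ^ 2 by ring, abs_div, abs_mul,
      abs_of_pos hnorm, abs_of_pos (by positivity : 0 < 2 * V ^ 2), div_le_iff₀ hnorm]
    exact hturn
  have harc := isDITraj_add_circularArc p L (vmax := vmax) (by rwa [abs_of_pos hV]) hacc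
  simpa [hsz, (hasDerivAt_add_circularArc p L 0).deriv] using harc.mem_reachDI hs hst

lemma image_parabolicCusp_subset_reachDI (humax : 0 ≤ umax) (hV : 0 < V) (hspeed : V ≤ vmax)
    {k a : ℝ} (hk : k = umax / (2 * V ^ 2)) (ha : a * (1 + (k * a) ^ 2) ≤ V * t) :
    (fun z ↦ p + L z) '' parabolicCusp k a ⊆ reachDI vmax umax p (L V) t := by
  rintro _ ⟨z, ⟨⟨hre, hre_le⟩, him⟩, rfl⟩
  have hnorm : ‖z‖ ^ 2 = z.re ^ 2 + z.im ^ 2 := by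
    rw [Complex.sq_norm, Complex.normSq_apply, sq, sq]
  have hk₀ : 0 ≤ k := hk ▸ by positivity
  refine add_map_mem_reachDI p L hV hspeed hre ?_ ?_
  · calc 2 * V ^ 2 * |z.im| ≤ 2 * V ^ 2 * (k * z.re ^ 2) := by gcongr
      _ = umax * z.re ^ 2 := by rw [hk]; field_simp
      _ ≤ umax * ‖z‖ ^ 2 := by rw [hnorm]; gcongr; exact le_add_of_nonneg_right (sq_nonneg _)
  · calc ‖z‖ ^ 2 = z.re ^ 2 + |z.im| ^ 2 := by rw [hnorm, sq_abs]
      _ ≤ z.re ^ 2 + (k * z.re ^ 2) ^ 2 := by gcongr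
      _ = z.re * (1 + (k * z.re) ^ 2) * z.re := by ring
      _ ≤ a * (1 + (k * a) ^ 2) * z.re := by
          have : 0 < a := hre.trans_le hre_le
          gcongr
      _ ≤ V * t * z.re := by gcongr

lemma ofReal_le_volume_reachDI {v : Plane} (humax : 0 ≤ umax) (hv : v ≠ 0)
    (hspeed : ‖v‖ ≤ vmax) (ht : 0 ≤ t) :
    ENNReal.ofReal (‖v‖ * umax / 3 / (1 + (umax * t / (2 * ‖v‖)) ^ 2) ^ 3 * t ^ 3) ≤
      volume (reachDI vmax umax p v t) := by
  obtain ⟨L, hL⟩ := exists_complex_linearIsometryEquiv_norm_eq finrank_euclideanSpace_fin v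
  have hV : 0 < ‖v‖ := norm_pos_iff.2 hv
  set V := ‖v‖
  set k := umax / (2 * V ^ 2) with hk
  set c := 1 + (umax * t / (2 * V)) ^ 2 with hc
  have hc_pos : 0 < c := by positivity
  have hkV : umax * t / (2 * V) = k * (V * t) := by
    rw [hk]
    field_simp
  have hlength_le : V * t / c ≤ V * t :=
    div_le_self (by positivity) (le_add_of_nonneg_right (sq_nonneg _))
  have hlength : V * t / c * (1 + (k * (V * t / c)) ^ 2) ≤ V * t := by
    calc V * t / c * (1 + (k * (V * t / c)) ^ 2) ≤ V * t / c * (1 + (k * (V * t)) ^ 2) := by gcongr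
      _ = V * t := by rw [← hkV, ← hc, div_mul_cancel₀ _ hc_pos.ne']
  calc ENNReal.ofReal (V * umax / 3 / c ^ 3 * t ^ 3)
      = ENNReal.ofReal (2 * k * (V * t / c) ^ 3 / 3) := by rw [hk]; congr 1; field_simp
    _ = volume ((fun z ↦ p + L z) '' parabolicCusp k (V * t / c)) := by
        rw [volume_image_add_linearIsometryEquiv,
          volume_parabolicCusp (by positivity) (by positivity)]
    _ ≤ volume (reachDI vmax umax p (L V) t) :=
        measure_mono (image_parabolicCusp_subset_reachDI p L humax hV hspeed hk hlength)
    _ = volume (reachDI vmax umax p v t) := by rw [hL]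

end Reachability

/-- small-time lower bound on the area of the reachable set of a DI robot
with nonzero initial speed: `liminf_{t→0⁺} Area(R_t(g)) / t³ ≥ v₀ u_max / 3`. -/
theorem di_reachable_area_lower_bound
    (vmax umax v₀ : ℝ) (hvmax : 0 < vmax) (humax : 0 < umax)
    (p v : Plane) (hv₀ : ‖v‖ = v₀) (h0 : 0 < v₀) (hle : v₀ ≤ vmax) :
    ENNReal.ofReal (v₀ * umax / 3) ≤
      Filter.liminf
        (fun t : ℝ => volume (reachDI vmax umax p v t) / ENNReal.ofReal (t ^ 3))
        (𝓝[>] 0) := by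
  have hlim : Tendsto
      (fun t : ℝ ↦ ENNReal.ofReal (v₀ * umax / 3 / (1 + (umax * t / (2 * v₀)) ^ 2) ^ 3)) (𝓝[>] 0)
      (𝓝 (ENNReal.ofReal (v₀ * umax / 3))) := by
    have hcont : Continuous fun t : ℝ ↦ v₀ * umax / 3 / (1 + (umax * t / (2 * v₀)) ^ 2) ^ 3 :=
      .div₀ (by fun_prop) (by fun_prop) fun t ↦ by positivity
    refine (ENNReal.tendsto_ofReal (hcont.tendsto' 0 _ ?_)).mono_left nhdsWithin_le_nhds
    simp
  rw [← hlim.liminf_eq]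
  refine liminf_le_liminf ?_
  filter_upwards [self_mem_nhdsWithin] with t (ht : 0 < t)
  have ht3 : ENNReal.ofReal (t ^ 3) ≠ 0 := by simpa using pow_pos ht 3
  rw [ENNReal.le_div_iff_mul_le (.inl ht3) (.inl ENNReal.ofReal_ne_top),
    ← ENNReal.ofReal_mul (by positivity), ← hv₀]
  exact ofReal_le_volume_reachDI p humax.le (norm_pos_iff.1 (hv₀ ▸ h0)) (hv₀ ▸ hle) ht.le
end
end

section
/- For a differential-drive robot with wheel-speed bound w_max > 0 and half-axle length ρ > 0, starting from any configuration g = (p, θ₀) ∈ ℝ² × ℝ, the integral of the minimum travel time over the small-time reachable set satisfies liminf_{t→0⁺} (∫_{R_t(g)} τ_DD(g, q) dq) / t⁴ ≥ w_max³ / (6ρ), where the integral is with respect to two-dimensional Lebesgue measure. -/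
open MeasureTheory Filter Topology Real

noncomputable section

/-- A differential-drive (DD) trajectory with wheel-speed bound `wmax` and half-axle
length `ρ`: coordinates `x y θ` driven by measurable wheel-speed controls `wl, wr`
bounded by `wmax`, satisfying (in integral form) `x' = (wl+wr)/2 ⬝ cos θ`,
`y' = (wl+wr)/2 ⬝ sin θ`, `θ' = (wr - wl)/(2ρ)`. -/
def IsDDTraj (wmax ρ : ℝ) (x y θ : ℝ → ℝ) : Prop :=
  ∃ wl wr : ℝ → ℝ, Measurable wl ∧ Measurable wr ∧
    (∀ t, |wl t| ≤ wmax) ∧ (∀ t, |wr t| ≤ wmax) ∧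
    (∀ t, x t = x 0 + ∫ s in (0:ℝ)..t, (wl s + wr s) / 2 * Real.cos (θ s)) ∧
    (∀ t, y t = y 0 + ∫ s in (0:ℝ)..t, (wl s + wr s) / 2 * Real.sin (θ s)) ∧
    (∀ t, θ t = θ 0 + ∫ s in (0:ℝ)..t, (wr s - wl s) / (2 * ρ))

/-- Minimum travel time of a DD robot from configuration `(p, θ₀)` to the point `q`. -/
def tauDD (wmax ρ : ℝ) (p : Plane) (θ₀ : ℝ) (q : Plane) : ℝ :=
  sInf {T : ℝ | 0 ≤ T ∧ ∃ x y θ : ℝ → ℝ, IsDDTraj wmax ρ x y θ ∧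
    x 0 = p 0 ∧ y 0 = p 1 ∧ θ 0 = θ₀ ∧ x T = q 0 ∧ y T = q 1}

/-- Reachable set at time `t` of a DD robot starting at configuration `(p, θ₀)`. -/
def reachDD (wmax ρ : ℝ) (p : Plane) (θ₀ : ℝ) (t : ℝ) : Set Plane :=
  {q | tauDD wmax ρ p θ₀ q ≤ t}

/-!
In terms of the forward speed `v` and the turning rate `ω` the two wheel-speed bounds read
`|v| + ρ |ω| ≤ w`, where `w = wmax`; in the frame of the initial configuration, with the plane
identified with `ℂ`, the travel time to `ζ = X + i Y` depends on `ζ` only. It is at least `|X| / w`.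
Turning by `arctan (Y / X)` and driving straight reaches `ζ` in time at most
`(ρ |Y / X| + |X| + |Y|) / w`, so with `W = w t` the reachable set at time `t` contains the lens
`|Y| ≤ (W - |X|) |X| / (ρ + W)`. The integral of `|X| / w` over this lens is
`w³ t⁴ / (3 (ρ + w t))`.

In the other direction, the heading changes by at most `w T / ρ` in time `T`, so `|Y| ≤ (w T)² / ρ`.
Hence the integral is at most `4 w³ t⁴ / ρ`, and its quotient by `t⁴` is bounded, so its liminf is
not a junk value. The travel time is continuous, hence integrable on the reachable set, because a
displacement of size `ε` can be corrected in time `O(ε + √ε)`.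
-/

section Concatenation

variable {E : Type*}

/-- The concatenation of two functions of time: `f` up to time `T`, followed by `g` restarted at
time `T`. -/
def concatAt (T : ℝ) (f g : ℝ → E) (t : ℝ) : E := if t ≤ T then f t else g (t - T)

lemma concatAt_of_le {T t : ℝ} (h : t ≤ T) (f g : ℝ → E) : concatAt T f g t = f t := if_pos h

lemma concatAt_of_lt {T t : ℝ} (h : T < t) (f g : ℝ → E) : concatAt T f g t = g (t - T) :=
  if_neg h.not_ge

lemma measurable_concatAt [MeasurableSpace E] (T : ℝ) {f g : ℝ → E} (hf : Measurable f)
    (hg : Measurable g) : Measurable (concatAt T f g) :=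
  Measurable.ite measurableSet_Iic hf (hg.comp (measurable_sub_const T))

variable [NormedAddCommGroup E]

lemma intervalIntegrable_of_norm_le {f : ℝ → E} (hf : AEStronglyMeasurable f) {C : ℝ}
    (hC : ∀ s, ‖f s‖ ≤ C) (a b : ℝ) : IntervalIntegrable f volume a b :=
  (intervalIntegrable_const (c := C)).mono_fun' hf.restrict (ae_of_all _ hC)

variable [NormedSpace ℝ E]

lemma integral_concatAt_of_le {T t : ℝ} (h0 : 0 ≤ t) (h : t ≤ T) (f g : ℝ → E) :
    ∫ s in (0:ℝ)..t, concatAt T f g s = ∫ s in (0:ℝ)..t, f s :=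
  intervalIntegral.integral_congr_Ioo_of_le h0 fun _ hs =>
    concatAt_of_le (hs.2.le.trans h) f g

lemma integral_concatAt_add {T t : ℝ} (hT : 0 ≤ T) (ht : 0 ≤ t) {f g : ℝ → E}
    (hf : IntervalIntegrable f volume 0 T) (hg : IntervalIntegrable g volume 0 t) :
    ∫ s in (0:ℝ)..T + t, concatAt T f g s = (∫ s in (0:ℝ)..T, f s) + ∫ s in (0:ℝ)..t, g s := by
  have hTt : T ≤ T + t := le_add_of_nonneg_right ht
  have on_left : Set.EqOn f (concatAt T f g) (Set.uIoc 0 T) := fun s hs =>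
    (concatAt_of_le (Set.uIoc_of_le hT ▸ hs).2 f g).symm
  have on_right : Set.EqOn (fun s => g (s - T)) (concatAt T f g) (Set.Ioc T (T + t)) :=
    fun s hs => (concatAt_of_lt hs.1 f g).symm
  have hg_shift : IntervalIntegrable (fun s => g (s - T)) volume T (T + t) := by
    simpa only [zero_add, add_comm t T] using hg.comp_sub_right T
  have hg_concat := hg_shift.congr (Set.uIoc_of_le hTt ▸ on_right)
  rw [← intervalIntegral.integral_add_adjacent_intervals (hf.congr on_left) hg_concat,
    integral_concatAt_of_le hT le_rfl,
    ← intervalIntegral.integral_congr_Ioo_of_le hTt (on_right.mono Set.Ioo_subset_Ioc_self),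
    intervalIntegral.integral_comp_sub_right, sub_self, add_sub_cancel_left]

end Concatenation

/-- A control in terms of the forward speed `v = (wl + wr) / 2` and the turning rate
`ω = (wr - wl) / (2ρ)`. The two wheel-speed bounds together say `|v| + ρ |ω| ≤ wmax`, because
`max |v + ρω| |v - ρω| = |v| + ρ |ω|`. -/
structure IsDDControl (wmax ρ : ℝ) (v ω : ℝ → ℝ) : Prop where
  measurable_speed : Measurable v
  measurable_turn : Measurable ω
  speed_add_turn_le : ∀ t, |v t| + ρ * |ω t| ≤ wmax

/-- The angle turned up to time `t` under the turning rate `ω`. -/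
def ddHeading (ω : ℝ → ℝ) (t : ℝ) : ℝ := ∫ s in (0:ℝ)..t, ω s

/-- The velocity at time `t` of a robot with initial heading `0`, as a complex number. -/
def ddVelocity (v ω : ℝ → ℝ) (t : ℝ) : ℂ := v t * Complex.exp (ddHeading ω t * Complex.I)

/-- The position at time `T` of a robot starting at the origin with heading `0`, as a complex
number. -/
def ddDisplacement (v ω : ℝ → ℝ) (T : ℝ) : ℂ := ∫ t in (0:ℝ)..T, ddVelocity v ω t

lemma norm_ddVelocity (v ω : ℝ → ℝ) (t : ℝ) : ‖ddVelocity v ω t‖ = |v t| := by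
  rw [ddVelocity, norm_mul, Complex.norm_exp_ofReal_mul_I, mul_one, Complex.norm_real,
    Real.norm_eq_abs]

lemma exp_mul_ddVelocity (α : ℝ) (v ω : ℝ → ℝ) (t : ℝ) :
    Complex.exp (α * Complex.I) * ddVelocity v ω t =
      v t * Complex.exp ((α + ddHeading ω t : ℝ) * Complex.I) := by
  rw [ddVelocity, mul_left_comm, ← Complex.exp_add, Complex.ofReal_add, add_mul]

namespace IsDDControl

variable {wmax ρ : ℝ} {v ω v₁ ω₁ v₂ ω₂ : ℝ → ℝ}

section

variable (h : IsDDControl wmax ρ v ω)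
include h

lemma abs_speed_le (hρ : 0 ≤ ρ) (t : ℝ) : |v t| ≤ wmax :=
  (le_add_of_nonneg_right (by positivity)).trans (h.speed_add_turn_le t)

lemma abs_turn_le (hρ : 0 < ρ) (t : ℝ) : |ω t| ≤ wmax / ρ := by
  rw [le_div_iff₀' hρ]
  exact (le_add_of_nonneg_left (abs_nonneg _)).trans (h.speed_add_turn_le t)

lemma intervalIntegrable_turn (hρ : 0 < ρ) (a b : ℝ) : IntervalIntegrable ω volume a b :=
  intervalIntegrable_of_norm_le h.measurable_turn.aestronglyMeasurable (h.abs_turn_le hρ) a b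

lemma measurable_velocity (hρ : 0 < ρ) : Measurable (ddVelocity v ω) := by
  have hv := h.measurable_speed
  have heading : Measurable (ddHeading ω) :=
    (intervalIntegral.continuous_primitive (h.intervalIntegrable_turn hρ) 0).measurable
  unfold ddVelocity
  fun_prop

lemma intervalIntegrable_velocity (hρ : 0 < ρ) (a b : ℝ) :
    IntervalIntegrable (ddVelocity v ω) volume a b :=
  intervalIntegrable_of_norm_le (h.measurable_velocity hρ).aestronglyMeasurable
    (fun t => (norm_ddVelocity v ω t).trans_le (h.abs_speed_le hρ.le t)) a b

lemma re_exp_mul_displacement (hρ : 0 < ρ) (α T : ℝ) :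
    (Complex.exp (α * Complex.I) * ddDisplacement v ω T).re =
      ∫ t in (0:ℝ)..T, v t * cos (α + ddHeading ω t) := by
  rw [ddDisplacement, ← intervalIntegral.integral_const_mul, ← RCLike.re_eq_complex_re,
    ← intervalIntegral.intervalIntegral_re ((h.intervalIntegrable_velocity hρ 0 T).const_mul _)]
  simp only [exp_mul_ddVelocity, RCLike.re_eq_complex_re, Complex.re_ofReal_mul,
    Complex.exp_ofReal_mul_I_re]

lemma im_exp_mul_displacement (hρ : 0 < ρ) (α T : ℝ) :
    (Complex.exp (α * Complex.I) * ddDisplacement v ω T).im =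
      ∫ t in (0:ℝ)..T, v t * sin (α + ddHeading ω t) := by
  rw [ddDisplacement, ← intervalIntegral.integral_const_mul, ← RCLike.im_eq_complex_im,
    ← intervalIntegral.intervalIntegral_im ((h.intervalIntegrable_velocity hρ 0 T).const_mul _)]
  simp only [exp_mul_ddVelocity, RCLike.im_eq_complex_im, Complex.im_ofReal_mul,
    Complex.exp_ofReal_mul_I_im]

lemma abs_heading_le (hρ : 0 < ρ) {t : ℝ} (ht : 0 ≤ t) : |ddHeading ω t| ≤ wmax / ρ * t := by
  simpa only [ddHeading, Real.norm_eq_abs, sub_zero, abs_of_nonneg ht] using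
    intervalIntegral.norm_integral_le_of_norm_le_const (a := 0) (b := t) (f := ω)
      fun s _ => h.abs_turn_le hρ s

lemma norm_displacement_le (hρ : 0 ≤ ρ) {T : ℝ} (hT : 0 ≤ T) :
    ‖ddDisplacement v ω T‖ ≤ wmax * T := by
  simpa only [ddDisplacement, sub_zero, abs_of_nonneg hT] using
    intervalIntegral.norm_integral_le_of_norm_le_const (a := 0) (b := T)
      fun t _ => (norm_ddVelocity v ω t).trans_le (h.abs_speed_le hρ t)

lemma abs_im_displacement_le (hρ : 0 < ρ) {T : ℝ} (hT : 0 ≤ T) :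
    |(ddDisplacement v ω T).im| ≤ (wmax * T) ^ 2 / ρ := by
  have lateral_speed_le : ∀ t ∈ Set.uIoc 0 T,
      ‖v t * sin (0 + ddHeading ω t)‖ ≤ wmax * (wmax / ρ * T) := fun t ht => by
    rw [Set.uIoc_of_le hT] at ht
    have hw : 0 ≤ wmax := (abs_nonneg _).trans (h.abs_speed_le hρ.le t)
    rw [norm_mul, zero_add]
    refine mul_le_mul (h.abs_speed_le hρ.le t) ?_ (norm_nonneg _) hw
    calc |sin (ddHeading ω t)| ≤ |ddHeading ω t| := abs_sin_le_abs
      _ ≤ wmax / ρ * t := h.abs_heading_le hρ ht.1.le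
      _ ≤ wmax / ρ * T := by gcongr; exact ht.2
  calc |(ddDisplacement v ω T).im| = ‖∫ t in (0:ℝ)..T, v t * sin (0 + ddHeading ω t)‖ := by
        simpa using congrArg norm (h.im_exp_mul_displacement hρ 0 T)
    _ ≤ wmax * (wmax / ρ * T) * |T - 0| :=
        intervalIntegral.norm_integral_le_of_norm_le_const lateral_speed_le
    _ = (wmax * T) ^ 2 / ρ := by rw [sub_zero, abs_of_nonneg hT]; ring

end

lemma concat (h₁ : IsDDControl wmax ρ v₁ ω₁) (h₂ : IsDDControl wmax ρ v₂ ω₂) (T : ℝ) :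
    IsDDControl wmax ρ (concatAt T v₁ v₂) (concatAt T ω₁ ω₂) where
  measurable_speed := measurable_concatAt T h₁.measurable_speed h₂.measurable_speed
  measurable_turn := measurable_concatAt T h₁.measurable_turn h₂.measurable_turn
  speed_add_turn_le t := by
    unfold concatAt
    split_ifs
    exacts [h₁.speed_add_turn_le t, h₂.speed_add_turn_le (t - T)]

lemma heading_concatAt_add (hρ : 0 < ρ) (h₁ : IsDDControl wmax ρ v₁ ω₁)
    (h₂ : IsDDControl wmax ρ v₂ ω₂) {T t : ℝ} (hT : 0 ≤ T) (ht : 0 ≤ t) :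
    ddHeading (concatAt T ω₁ ω₂) (T + t) = ddHeading ω₁ T + ddHeading ω₂ t :=
  integral_concatAt_add hT ht (h₁.intervalIntegrable_turn hρ 0 T)
    (h₂.intervalIntegrable_turn hρ 0 t)

lemma displacement_concatAt_add (hρ : 0 < ρ) (h₁ : IsDDControl wmax ρ v₁ ω₁)
    (h₂ : IsDDControl wmax ρ v₂ ω₂) {T t : ℝ} (hT : 0 ≤ T) (ht : 0 ≤ t) :
    ddDisplacement (concatAt T v₁ v₂) (concatAt T ω₁ ω₂) (T + t) =
      ddDisplacement v₁ ω₁ T +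
        Complex.exp (ddHeading ω₁ T * Complex.I) * ddDisplacement v₂ ω₂ t := by
  have velocity_concat : Set.EqOn
      (ddVelocity (concatAt T v₁ v₂) (concatAt T ω₁ ω₂))
      (concatAt T (ddVelocity v₁ ω₁)
        fun s => Complex.exp (ddHeading ω₁ T * Complex.I) * ddVelocity v₂ ω₂ s)
      (Set.Ioo 0 (T + t)) := fun s hs => by
    rcases le_or_gt s T with hsT | hTs
    · simp only [ddVelocity, concatAt_of_le hsT, ddHeading, integral_concatAt_of_le hs.1.le hsT]
    · have heading := heading_concatAt_add hρ h₁ h₂ hT (sub_nonneg.mpr hTs.le)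
      rw [add_sub_cancel] at heading
      rw [concatAt_of_lt hTs, exp_mul_ddVelocity, ddVelocity, concatAt_of_lt hTs, heading]
  rw [ddDisplacement, intervalIntegral.integral_congr_Ioo_of_le (by positivity) velocity_concat,
    integral_concatAt_add hT ht (h₁.intervalIntegrable_velocity hρ 0 T)
      ((h₂.intervalIntegrable_velocity hρ 0 t).const_mul _),
    intervalIntegral.integral_const_mul, ddDisplacement, ddDisplacement]

end IsDDControl

/-- The robot can move by the displacement `ζ` while turning by `φ`, both relative to its initial
configuration, in time exactly `T`. -/
def DDReach (wmax ρ T : ℝ) (ζ : ℂ) (φ : ℝ) : Prop :=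
  ∃ v ω : ℝ → ℝ, IsDDControl wmax ρ v ω ∧ ddDisplacement v ω T = ζ ∧ ddHeading ω T = φ

namespace DDReach

variable {wmax ρ T T₁ T₂ φ φ₁ φ₂ : ℝ} {ζ ζ₁ ζ₂ : ℂ}

lemma norm_le (hρ : 0 ≤ ρ) (hT : 0 ≤ T) (h : DDReach wmax ρ T ζ φ) : ‖ζ‖ ≤ wmax * T := by
  obtain ⟨v, ω, hc, rfl, -⟩ := h
  exact hc.norm_displacement_le hρ hT

lemma abs_im_le (hρ : 0 < ρ) (hT : 0 ≤ T) (h : DDReach wmax ρ T ζ φ) :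
    |ζ.im| ≤ (wmax * T) ^ 2 / ρ := by
  obtain ⟨v, ω, hc, rfl, -⟩ := h
  exact hc.abs_im_displacement_le hρ hT

lemma trans (hρ : 0 < ρ) (hT₁ : 0 ≤ T₁) (hT₂ : 0 ≤ T₂) (h₁ : DDReach wmax ρ T₁ ζ₁ φ₁)
    (h₂ : DDReach wmax ρ T₂ ζ₂ φ₂) :
    DDReach wmax ρ (T₁ + T₂) (ζ₁ + Complex.exp (φ₁ * Complex.I) * ζ₂) (φ₁ + φ₂) := by
  obtain ⟨v₁, ω₁, hc₁, rfl, rfl⟩ := h₁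
  obtain ⟨v₂, ω₂, hc₂, rfl, rfl⟩ := h₂
  exact ⟨_, _, hc₁.concat hc₂ T₁, hc₁.displacement_concatAt_add hρ hc₂ hT₁ hT₂,
    hc₁.heading_concatAt_add hρ hc₂ hT₁ hT₂⟩

lemma straight_of_speed {c : ℝ} (hc : |c| ≤ wmax) (ρ T : ℝ) :
    DDReach wmax ρ T ((c * T : ℝ) : ℂ) 0 := by
  refine ⟨fun _ => c, fun _ => 0, ⟨measurable_const, measurable_const, fun _ => by simpa⟩, ?_, ?_⟩
  · simp [ddDisplacement, ddVelocity, ddHeading, mul_comm]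
  · simp [ddHeading]

lemma rotate_of_rate {c : ℝ} (hc : ρ * |c| ≤ wmax) (T : ℝ) : DDReach wmax ρ T 0 (c * T) := by
  refine ⟨fun _ => 0, fun _ => c, ⟨measurable_const, measurable_const, fun _ => by simpa⟩, ?_, ?_⟩
  · simp [ddDisplacement, ddVelocity]
  · simp [ddHeading, mul_comm]

lemma straight (hw : 0 < wmax) (ρ d : ℝ) : DDReach wmax ρ (|d| / wmax) d 0 := by
  have speed_le : |d / (|d| / wmax)| ≤ wmax := by
    rw [abs_div, abs_of_nonneg (by positivity : 0 ≤ |d| / wmax), div_div_eq_mul_div,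
      mul_div_right_comm]
    exact mul_le_of_le_one_left hw.le (div_self_le_one _)
  have speed_mul : d / (|d| / wmax) * (|d| / wmax) = d :=
    div_mul_cancel_of_imp fun h => by simpa [hw.ne'] using h
  simpa only [speed_mul] using straight_of_speed speed_le ρ (|d| / wmax)

lemma rotate (hw : 0 < wmax) (hρ : 0 < ρ) (α : ℝ) : DDReach wmax ρ (ρ * |α| / wmax) 0 α := by
  have rate_le : ρ * |α / (ρ * |α| / wmax)| ≤ wmax := by
    rw [abs_div, abs_of_nonneg (by positivity : 0 ≤ ρ * |α| / wmax), div_div_eq_mul_div,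
      ← mul_div_assoc, ← mul_assoc, mul_div_right_comm]
    exact mul_le_of_le_one_left hw.le (div_self_le_one _)
  have rate_mul : α / (ρ * |α| / wmax) * (ρ * |α| / wmax) = α :=
    div_mul_cancel_of_imp fun h => by simpa [hw.ne', hρ.ne'] using h
  simpa only [rate_mul] using rotate_of_rate rate_le (ρ * |α| / wmax)

lemma mono_time (hw : 0 ≤ wmax) (hρ : 0 < ρ) (hT₁ : 0 ≤ T₁) (hT : T₁ ≤ T₂)
    (h : DDReach wmax ρ T₁ ζ φ) : DDReach wmax ρ T₂ ζ φ := by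
  have rest : DDReach wmax ρ (T₂ - T₁) 0 0 := by
    simpa using straight_of_speed (c := 0) (by simpa using hw) ρ (T₂ - T₁)
  simpa using h.trans hρ hT₁ (sub_nonneg.mpr hT) rest

end DDReach

lemma abs_arctan_le_abs (s : ℝ) : |arctan s| ≤ |s| := by
  wlog hs : 0 ≤ s generalizing s
  · simpa only [arctan_neg, abs_neg] using this (-s) (neg_nonneg.mpr (not_le.mp hs).le)
  have h := arctan_nonneg.mpr hs
  rw [abs_of_nonneg h, abs_of_nonneg hs]
  simpa only [tan_arctan] using le_tan h (arctan_lt_pi_div_two s)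

lemma exp_arctan_mul_I (s : ℝ) :
    Complex.exp (arctan s * Complex.I) = (1 + s * Complex.I) / (√(1 + s ^ 2) : ℝ) := by
  rw [Complex.exp_mul_I, ← Complex.ofReal_cos, ← Complex.ofReal_sin, cos_arctan, sin_arctan]
  push_cast
  ring

namespace DDReach

variable {wmax ρ : ℝ}

/-- Drive `b`, turn by `arctan s`, then drive along a line of slope `s`. -/
lemma straight_rotate_straight (hw : 0 < wmax) (hρ : 0 < ρ) (b c s : ℝ) :
    DDReach wmax ρ ((|b| + ρ * |s| + |c| * (1 + |s|)) / wmax) (b + c * (1 + s * Complex.I))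
      (arctan s) := by
  set r := √(1 + s ^ 2) with hr
  have r_pos : 0 < r := by positivity
  have r_le : r ≤ 1 + |s| := by
    refine Real.sqrt_le_iff.mpr ⟨by positivity, ?_⟩
    nlinarith [sq_abs s, abs_nonneg s]
  have move := ((straight hw ρ b).trans hρ (by positivity) (by positivity)
    (rotate hw hρ (arctan s))).trans hρ (by positivity) (by positivity) (straight hw ρ (c * r))
  have time_le : |b| / wmax + ρ * |arctan s| / wmax + |c * r| / wmax ≤
      (|b| + ρ * |s| + |c| * (1 + |s|)) / wmax := by
    rw [← add_div, ← add_div, abs_mul, abs_of_pos r_pos]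
    gcongr (|b| + ρ * ?_ + |c| * ?_) / wmax
    exact abs_arctan_le_abs s
  have r_ne : (r : ℂ) ≠ 0 := Complex.ofReal_ne_zero.mpr r_pos.ne'
  convert move.mono_time hw.le hρ (by positivity) time_le using 1
  · simp only [mul_zero, add_zero, zero_add, exp_arctan_mul_I, ← hr, Complex.ofReal_mul]
    field_simp
  · ring

end DDReach

/-- The times in which the robot can move by the displacement `ζ`. -/
def ddTimes (wmax ρ : ℝ) (ζ : ℂ) : Set ℝ := {T | 0 ≤ T ∧ ∃ φ, DDReach wmax ρ T ζ φ}

/-- The minimum travel time `τ_DD` in the body frame of the initial configuration, that is, starting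
at the origin of `ℂ` with heading `0`. -/
def ddTime (wmax ρ : ℝ) (ζ : ℂ) : ℝ := sInf (ddTimes wmax ρ ζ)

section TravelTime

variable {wmax ρ : ℝ}

lemma ddTime_nonneg (wmax ρ : ℝ) (ζ : ℂ) : 0 ≤ ddTime wmax ρ ζ := Real.sInf_nonneg fun _ hT => hT.1

lemma ddTime_le_of_mem {ζ : ℂ} {T : ℝ} (h : T ∈ ddTimes wmax ρ ζ) : ddTime wmax ρ ζ ≤ T :=
  csInf_le ⟨0, fun _ hT => hT.1⟩ h

variable (hw : 0 < wmax) (hρ : 0 < ρ)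
include hw hρ

-- `ζ = b + c (1 + s i)` with slope `s = √|Im ζ|`, so that both the turn and the drive along the
-- slope are of order `√|Im ζ|`; when `s = 0` the junk value `c = 0` is the right one.
lemma exists_ddReach_of_norm (ζ : ℂ) :
    ∃ φ, DDReach wmax ρ ((2 * ‖ζ‖ + (2 + ρ) * √‖ζ‖) / wmax) ζ φ := by
  set s := √|ζ.im| with hs
  set c := ζ.im / s with hc
  have abs_c : |c| = s := by rw [hc, abs_div, abs_of_nonneg (sqrt_nonneg _), div_sqrt]
  have mul_c : c * s = ζ.im := div_mul_cancel_of_imp fun h => by simpa [hs] using h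
  have s_le : s ≤ √‖ζ‖ := Real.sqrt_le_sqrt (Complex.abs_im_le_norm ζ)
  have displacement : ((ζ.re - c : ℝ) : ℂ) + c * (1 + s * Complex.I) = ζ := by
    apply Complex.ext <;> simp [mul_c]
  have time_le : |ζ.re - c| + ρ * |s| + |c| * (1 + |s|) ≤ 2 * ‖ζ‖ + (2 + ρ) * √‖ζ‖ := by
    rw [abs_of_nonneg (sqrt_nonneg _ : 0 ≤ s), abs_c]
    calc |ζ.re - c| + ρ * s + s * (1 + s)
        ≤ (|ζ.re| + s) + ρ * s + s * (1 + s) := by gcongr; exact abs_c ▸ abs_sub ζ.re c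
      _ = |ζ.re| + s * s + (2 + ρ) * s := by ring
      _ ≤ ‖ζ‖ + √‖ζ‖ * √‖ζ‖ + (2 + ρ) * √‖ζ‖ := by gcongr; exact Complex.abs_re_le_norm ζ
      _ = 2 * ‖ζ‖ + (2 + ρ) * √‖ζ‖ := by rw [Real.mul_self_sqrt (norm_nonneg ζ)]; ring
  have move := DDReach.straight_rotate_straight hw hρ (ζ.re - c) c s
  rw [displacement] at move
  exact ⟨_, move.mono_time hw.le hρ (by positivity) (by gcongr)⟩

lemma ddTimes_nonempty (ζ : ℂ) : (ddTimes wmax ρ ζ).Nonempty :=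
  ⟨_, by positivity, exists_ddReach_of_norm hw hρ ζ⟩

lemma ddTime_le_add (ζ ζ' : ℂ) : ddTime wmax ρ ζ' ≤
    ddTime wmax ρ ζ + (2 * ‖ζ' - ζ‖ + (2 + ρ) * √‖ζ' - ζ‖) / wmax := by
  rw [← sub_le_iff_le_add]
  refine le_csInf (ddTimes_nonempty hw hρ ζ) ?_
  rintro T ⟨hT, φ, reach⟩
  obtain ⟨φ', correction⟩ :=
    exists_ddReach_of_norm hw hρ ((Complex.exp (φ * Complex.I))⁻¹ * (ζ' - ζ))
  have total := reach.trans hρ hT (by positivity) correction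
  rw [mul_inv_cancel_left₀ (Complex.exp_ne_zero _), add_sub_cancel, norm_mul, norm_inv,
    Complex.norm_exp_ofReal_mul_I, inv_one, one_mul] at total
  exact sub_le_iff_le_add.mpr (ddTime_le_of_mem ⟨by positivity, _, total⟩)

lemma continuous_ddTime : Continuous (ddTime wmax ρ) := by
  refine continuous_iff_continuousAt.mpr fun ζ => tendsto_iff_dist_tendsto_zero.mpr ?_
  refine squeeze_zero (fun _ => dist_nonneg) (fun ζ' => ?_) (?_ : Tendsto
    (fun ζ' => (2 * ‖ζ' - ζ‖ + (2 + ρ) * √‖ζ' - ζ‖) / wmax) (𝓝 ζ) (𝓝 0))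
  · rw [Real.dist_eq, abs_sub_le_iff, sub_le_iff_le_add', sub_le_iff_le_add']
    exact ⟨ddTime_le_add hw hρ ζ ζ', norm_sub_rev ζ ζ' ▸ ddTime_le_add hw hρ ζ' ζ⟩
  · exact Continuous.tendsto' (by fun_prop) _ _ (by simp)

lemma abs_re_div_le_ddTime (ζ : ℂ) : |ζ.re| / wmax ≤ ddTime wmax ρ ζ := by
  refine le_csInf (ddTimes_nonempty hw hρ ζ) ?_
  rintro T ⟨hT, φ, reach⟩
  rw [div_le_iff₀' hw]
  exact (Complex.abs_re_le_norm ζ).trans (reach.norm_le hρ.le hT)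

lemma abs_im_le_ddTime_sq (ζ : ℂ) : |ζ.im| ≤ (wmax * ddTime wmax ρ ζ) ^ 2 / ρ := by
  have sqrt_le : √(ρ * |ζ.im|) / wmax ≤ ddTime wmax ρ ζ := by
    refine le_csInf (ddTimes_nonempty hw hρ ζ) ?_
    rintro T ⟨hT, φ, reach⟩
    rw [div_le_iff₀' hw, Real.sqrt_le_left (by positivity), ← le_div_iff₀' hρ]
    exact reach.abs_im_le hρ hT
  rwa [div_le_iff₀' hw, Real.sqrt_le_left (mul_nonneg hw.le (ddTime_nonneg wmax ρ ζ)),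
    ← le_div_iff₀' hρ] at sqrt_le

lemma ddTime_le_of_re_eq_zero_imp {ζ : ℂ} (h : ζ.re = 0 → ζ.im = 0) :
    ddTime wmax ρ ζ ≤ (ρ * |ζ.im / ζ.re| + |ζ.re| * (1 + |ζ.im / ζ.re|)) / wmax := by
  have displacement :
      ((0 : ℝ) : ℂ) + ζ.re * (1 + (ζ.im / ζ.re : ℝ) * Complex.I) = ζ := by
    apply Complex.ext <;> simp [mul_div_cancel_of_imp' h]
  have move := DDReach.straight_rotate_straight hw hρ 0 ζ.re (ζ.im / ζ.re)
  rw [displacement, abs_zero, zero_add] at move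
  exact ddTime_le_of_mem ⟨by positivity, _, move⟩

end TravelTime

section Region

/-- The region between the graphs of `±h |x|` over `|x| ≤ W`, in the complex plane. -/
def absRegion (W : ℝ) (h : ℝ → ℝ) : Set ℂ := {ζ | |ζ.re| ≤ W ∧ |ζ.im| ≤ h |ζ.re|}

variable {W : ℝ} {h f : ℝ → ℝ}

lemma isCompact_absRegion (W : ℝ) (hh : Continuous h) : IsCompact (absRegion W h) := by
  obtain ⟨M, hM⟩ := (isCompact_Icc (a := 0) (b := W)).bddAbove_image hh.continuousOn
  have closed : IsClosed (absRegion W h) :=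
    (isClosed_le (f := fun ζ : ℂ => |ζ.re|) (by fun_prop) continuous_const).inter
      (isClosed_le (f := fun ζ : ℂ => |ζ.im|) (g := fun ζ => h |ζ.re|) (by fun_prop) (by fun_prop))
  have bounded : ∀ ζ ∈ absRegion W h, ‖ζ‖ ≤ W + M := fun ζ hζ => by
    calc ‖ζ‖ ≤ |ζ.re| + |ζ.im| := Complex.norm_le_abs_re_add_abs_im ζ
      _ ≤ W + M := add_le_add hζ.1
        (hζ.2.trans (hM (Set.mem_image_of_mem h ⟨abs_nonneg ζ.re, hζ.1⟩)))
  exact Metric.isCompact_of_isClosed_isBounded closed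
    (isBounded_iff_forall_norm_le.mpr ⟨W + M, bounded⟩)

lemma integral_indicator_absRegion_slice (h_nonneg : ∀ r, 0 ≤ r → r ≤ W → 0 ≤ h r) (x : ℝ) :
    ∫ y : ℝ, (absRegion W h).indicator (fun ζ => f |ζ.re|) (⟨x, y⟩ : ℂ) =
      (Set.Iic W).indicator (fun r => 2 * (h r * f r)) |x| := by
  by_cases hx : |x| ≤ W
  · have slice : (fun y : ℝ => (absRegion W h).indicator (fun ζ => f |ζ.re|) (⟨x, y⟩ : ℂ)) =
        (Set.Icc (-h |x|) (h |x|)).indicator fun _ => f |x| := by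
      funext y
      simp only [Set.indicator, absRegion, Set.mem_ofPred_eq, hx, true_and, Set.mem_Icc,
        abs_le (a := y)]
    have hx_nonneg := h_nonneg |x| (abs_nonneg x) hx
    rw [slice, integral_indicator measurableSet_Icc, setIntegral_const,
      Real.volume_real_Icc_of_le (by linarith), smul_eq_mul,
      Set.indicator_of_mem (Set.mem_Iic.mpr hx)]
    ring
  · simp [Set.indicator, absRegion, hx]

lemma setIntegral_absRegion (hW : 0 ≤ W) (hh : Continuous h) (hf : Continuous f)
    (h_nonneg : ∀ r, 0 ≤ r → r ≤ W → 0 ≤ h r) :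
    ∫ ζ in absRegion W h, f |ζ.re| = 4 * ∫ r in (0:ℝ)..W, h r * f r := by
  have compact := isCompact_absRegion W hh
  have to_prod := Complex.volume_preserving_equiv_real_prod.symm
  set F : ℂ → ℝ := (absRegion W h).indicator fun ζ => f |ζ.re| with hF
  have integrable : Integrable F :=
    (integrable_indicator_iff compact.measurableSet).mpr
      ((Continuous.continuousOn (by fun_prop)).integrableOn_compact compact)
  calc ∫ ζ in absRegion W h, f |ζ.re|
      = ∫ ζ, F ζ := (integral_indicator compact.measurableSet).symm
    _ = ∫ z : ℝ × ℝ, F ⟨z.1, z.2⟩ := (to_prod.integral_comp' F).symm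
    _ = ∫ x : ℝ, ∫ y : ℝ, F ⟨x, y⟩ :=
        integral_prod _ (to_prod.integrable_comp_emb
          Complex.measurableEquivRealProd.symm.measurableEmbedding |>.mpr integrable)
    _ = ∫ x : ℝ, (Set.Iic W).indicator (fun r => 2 * (h r * f r)) |x| := by
        simp only [hF, integral_indicator_absRegion_slice h_nonneg]
    _ = 4 * ∫ r in (0:ℝ)..W, h r * f r := by
        rw [integral_comp_abs, setIntegral_indicator measurableSet_Iic, Set.Ioi_inter_Iic,
          ← intervalIntegral.integral_of_le hW, intervalIntegral.integral_const_mul]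
        ring

end Region

section Integral

lemma integral_sub_mul_sq (W : ℝ) : ∫ r in (0:ℝ)..W, (W - r) * r ^ 2 = W ^ 4 / 12 := by
  have expand (r : ℝ) : (W - r) * r ^ 2 = W * r ^ 2 - r ^ 3 := by ring
  simp only [expand]
  rw [intervalIntegral.integral_sub (Continuous.intervalIntegrable (by fun_prop) _ _)
    (Continuous.intervalIntegrable (by fun_prop) _ _), intervalIntegral.integral_const_mul,
    integral_pow, integral_pow]
  ring

variable {wmax ρ t : ℝ} (hw : 0 < wmax) (hρ : 0 < ρ)
include hw hρ

lemma sublevel_ddTime_subset (t : ℝ) : {ζ | ddTime wmax ρ ζ ≤ t} ⊆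
    absRegion (wmax * t) fun _ => (wmax * t) ^ 2 / ρ := by
  intro ζ (hζ : ddTime wmax ρ ζ ≤ t)
  have time_nonneg := ddTime_nonneg wmax ρ ζ
  have im_le : |ζ.im| ≤ (wmax * t) ^ 2 / ρ :=
    (abs_im_le_ddTime_sq hw hρ ζ).trans (by gcongr)
  exact ⟨(div_le_iff₀' hw).mp ((abs_re_div_le_ddTime hw hρ ζ).trans hζ), im_le⟩

lemma absRegion_subset_sublevel_ddTime (ht : 0 ≤ t) :
    absRegion (wmax * t) (fun r => (wmax * t - r) * r / (ρ + wmax * t)) ⊆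
      {ζ | ddTime wmax ρ ζ ≤ t} := by
  rintro ζ ⟨re_le, im_le⟩
  have re_zero : ζ.re = 0 → ζ.im = 0 := fun h => by simpa [h] using im_le
  have slope_le : |ζ.im / ζ.re| * (ρ + wmax * t) ≤ wmax * t - |ζ.re| := by
    rw [← le_div_iff₀ (by positivity), abs_div]
    refine div_le_of_le_mul₀ (abs_nonneg _) (div_nonneg (by linarith) (by positivity)) ?_
    rwa [div_mul_eq_mul_div]
  refine (ddTime_le_of_re_eq_zero_imp hw hρ re_zero).trans ((div_le_iff₀' hw).mpr ?_)
  calc ρ * |ζ.im / ζ.re| + |ζ.re| * (1 + |ζ.im / ζ.re|)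
      ≤ ρ * |ζ.im / ζ.re| + (|ζ.re| + wmax * t * |ζ.im / ζ.re|) := by
        rw [mul_add, mul_one]
        gcongr _ + (_ + ?_)
        exact mul_le_mul_of_nonneg_right re_le (abs_nonneg _)
    _ = |ζ.re| + |ζ.im / ζ.re| * (ρ + wmax * t) := by ring
    _ ≤ wmax * t := by linarith

lemma integrableOn_sublevel_ddTime (t : ℝ) :
    IntegrableOn (ddTime wmax ρ) {ζ | ddTime wmax ρ ζ ≤ t} :=
  ((continuous_ddTime hw hρ).continuousOn.integrableOn_compact
    (isCompact_absRegion (wmax * t) continuous_const)).mono_set (sublevel_ddTime_subset hw hρ t)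

lemma setIntegral_sublevel_ddTime_le (ht : 0 ≤ t) :
    ∫ ζ in {ζ | ddTime wmax ρ ζ ≤ t}, ddTime wmax ρ ζ ≤ 4 * wmax ^ 3 * t ^ 4 / ρ := by
  set B := absRegion (wmax * t) fun _ => (wmax * t) ^ 2 / ρ
  have const_integrable : IntegrableOn (fun _ : ℂ => t) B :=
    continuousOn_const.integrableOn_compact (isCompact_absRegion (wmax * t) continuous_const)
  have subset := sublevel_ddTime_subset hw hρ t
  calc ∫ ζ in {ζ | ddTime wmax ρ ζ ≤ t}, ddTime wmax ρ ζ
      ≤ ∫ _ in {ζ | ddTime wmax ρ ζ ≤ t}, t :=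
        setIntegral_mono_on (integrableOn_sublevel_ddTime hw hρ t)
          (const_integrable.mono_set subset)
          (measurableSet_le (continuous_ddTime hw hρ).measurable measurable_const) fun _ hζ => hζ
    _ ≤ ∫ _ in B, t :=
        setIntegral_mono_set const_integrable (ae_of_all _ fun _ => ht) (ae_of_all _ subset)
    _ = 4 * ∫ _ in (0:ℝ)..wmax * t, (wmax * t) ^ 2 / ρ * t :=
        setIntegral_absRegion (f := fun _ => t) (by positivity) continuous_const continuous_const
          fun _ _ _ => by positivity
    _ = 4 * wmax ^ 3 * t ^ 4 / ρ := by
        rw [intervalIntegral.integral_const, smul_eq_mul, sub_zero]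
        ring

lemma le_setIntegral_sublevel_ddTime (ht : 0 ≤ t) :
    wmax ^ 3 * t ^ 4 / (3 * (ρ + wmax * t)) ≤
      ∫ ζ in {ζ | ddTime wmax ρ ζ ≤ t}, ddTime wmax ρ ζ := by
  set W := wmax * t with hW
  have W_nonneg : 0 ≤ W := by positivity
  set h : ℝ → ℝ := fun r => (W - r) * r / (ρ + W) with hh
  have h_cont : Continuous h := by fun_prop
  have subset := absRegion_subset_sublevel_ddTime hw hρ ht
  have integrable := integrableOn_sublevel_ddTime hw hρ t
  have area_integral : 4 * ∫ r in (0:ℝ)..W, h r * (r / wmax) =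
      wmax ^ 3 * t ^ 4 / (3 * (ρ + W)) := by
    have integrand (r : ℝ) : h r * (r / wmax) = (W - r) * r ^ 2 / ((ρ + W) * wmax) := by
      rw [hh]
      field_simp
    simp only [integrand, intervalIntegral.integral_div, integral_sub_mul_sq, hW]
    field_simp
    ring
  calc wmax ^ 3 * t ^ 4 / (3 * (ρ + W))
      = ∫ ζ in absRegion W h, |ζ.re| / wmax := by
        rw [← area_integral, setIntegral_absRegion (f := fun r => r / wmax) W_nonneg h_cont
          (by fun_prop) fun r h0 hr => div_nonneg (mul_nonneg (sub_nonneg.mpr hr) h0)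
            (by positivity)]
    _ ≤ ∫ ζ in absRegion W h, ddTime wmax ρ ζ :=
        setIntegral_mono ((Continuous.continuousOn (by fun_prop)).integrableOn_compact
          (isCompact_absRegion W h_cont)) (integrable.mono_set subset) (abs_re_div_le_ddTime hw hρ)
    _ ≤ ∫ ζ in {ζ | ddTime wmax ρ ζ ≤ t}, ddTime wmax ρ ζ :=
        setIntegral_mono_set integrable (ae_of_all _ (ddTime_nonneg wmax ρ)) (ae_of_all _ subset)

end Integral

lemma abs_sub_le_and_abs_add_le_iff {a b c : ℝ} :
    (|a - b| ≤ c ∧ |a + b| ≤ c) ↔ |a| + |b| ≤ c := by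
  grind

section BodyFrame

/-- The chart of the plane adapted to the configuration `(p, θ₀)`: `p` becomes the origin of `ℂ` and
the heading `θ₀` becomes the positive real direction. -/
def bodyFrame (p : Plane) (θ₀ : ℝ) : ℂ ≃ᵢ Plane :=
  ((rotation (Circle.exp θ₀)).trans Complex.orthonormalBasisOneI.repr).toIsometryEquiv.trans
    (IsometryEquiv.addLeft p)

lemma bodyFrame_apply_zero (p : Plane) (θ₀ : ℝ) (ζ : ℂ) :
    bodyFrame p θ₀ ζ 0 = p 0 + (Complex.exp (θ₀ * Complex.I) * ζ).re := by
  simp [bodyFrame, rotation_apply, Circle.coe_exp]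

lemma bodyFrame_apply_one (p : Plane) (θ₀ : ℝ) (ζ : ℂ) :
    bodyFrame p θ₀ ζ 1 = p 1 + (Complex.exp (θ₀ * Complex.I) * ζ).im := by
  simp [bodyFrame, rotation_apply, Circle.coe_exp]

lemma measurePreserving_bodyFrame (p : Plane) (θ₀ : ℝ) : MeasurePreserving (bodyFrame p θ₀) :=
  (measurePreserving_add_left volume p).comp
    ((rotation (Circle.exp θ₀)).trans Complex.orthonormalBasisOneI.repr).measurePreserving

variable {wmax ρ : ℝ}

lemma IsDDTraj.ddReach (hρ : 0 < ρ) {x y θ : ℝ → ℝ} (h : IsDDTraj wmax ρ x y θ) {p : Plane}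
    (hx₀ : x 0 = p 0) (hy₀ : y 0 = p 1) {T : ℝ} {ζ : ℂ} (hx : x T = bodyFrame p (θ 0) ζ 0)
    (hy : y T = bodyFrame p (θ 0) ζ 1) : ∃ φ, DDReach wmax ρ T ζ φ := by
  obtain ⟨wl, wr, meas_l, meas_r, bound_l, bound_r, x_eq, y_eq, θ_eq⟩ := h
  set v : ℝ → ℝ := fun t => (wl t + wr t) / 2 with hv
  set ω : ℝ → ℝ := fun t => (wr t - wl t) / (2 * ρ) with hω
  have control : IsDDControl wmax ρ v ω := by
    refine ⟨by fun_prop, by fun_prop, fun t => ?_⟩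
    have left : v t - ρ * ω t = wl t := by simp only [hv, hω]; field_simp; ring
    have right : v t + ρ * ω t = wr t := by simp only [hv, hω]; field_simp; ring
    have turn_speed : ρ * |ω t| = |ρ * ω t| := by rw [abs_mul, abs_of_pos hρ]
    rw [turn_speed, ← abs_sub_le_and_abs_add_le_iff, left, right]
    exact ⟨bound_l t, bound_r t⟩
  have heading : θ = fun t => θ 0 + ddHeading ω t := funext θ_eq
  refine ⟨ddHeading ω T, v, ω, control, ?_, rfl⟩
  refine mul_left_cancel₀ (Complex.exp_ne_zero (θ 0 * Complex.I)) (Complex.ext ?_ ?_)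
  · rw [control.re_exp_mul_displacement hρ, ← add_right_inj (p 0), ← bodyFrame_apply_zero, ← hx,
      x_eq, hx₀]
    conv_rhs => rw [heading]
  · rw [control.im_exp_mul_displacement hρ, ← add_right_inj (p 1), ← bodyFrame_apply_one, ← hy,
      y_eq, hy₀]
    conv_rhs => rw [heading]

lemma DDReach.exists_isDDTraj (hρ : 0 < ρ) {T φ : ℝ} {ζ : ℂ} (h : DDReach wmax ρ T ζ φ)
    (p : Plane) (θ₀ : ℝ) :
    ∃ x y θ : ℝ → ℝ, IsDDTraj wmax ρ x y θ ∧ x 0 = p 0 ∧ y 0 = p 1 ∧ θ 0 = θ₀ ∧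
      x T = bodyFrame p θ₀ ζ 0 ∧ y T = bodyFrame p θ₀ ζ 1 := by
  obtain ⟨v, ω, control, rfl, -⟩ := h
  have start : bodyFrame p θ₀ (ddDisplacement v ω 0) = p := by
    ext i
    fin_cases i <;> simp [bodyFrame_apply_zero, bodyFrame_apply_one, ddDisplacement]
  have wheels (t : ℝ) : |v t - ρ * ω t| ≤ wmax ∧ |v t + ρ * ω t| ≤ wmax := by
    rw [abs_sub_le_and_abs_add_le_iff, abs_mul, abs_of_pos hρ]
    exact control.speed_add_turn_le t
  have speed (t : ℝ) : (v t - ρ * ω t + (v t + ρ * ω t)) / 2 = v t := by ring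
  have turn (t : ℝ) : (v t + ρ * ω t - (v t - ρ * ω t)) / (2 * ρ) = ω t := by field_simp; ring
  have hv := control.measurable_speed
  have hω := control.measurable_turn
  refine ⟨fun t => bodyFrame p θ₀ (ddDisplacement v ω t) 0,
    fun t => bodyFrame p θ₀ (ddDisplacement v ω t) 1, fun t => θ₀ + ddHeading ω t,
    ⟨fun t => v t - ρ * ω t, fun t => v t + ρ * ω t, by fun_prop, by fun_prop,
      fun t => (wheels t).1, fun t => (wheels t).2, fun t => ?_, fun t => ?_, fun t => ?_⟩,
    by simp only [start], by simp only [start], by simp [ddHeading], rfl, rfl⟩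
  · simp only [speed, start, bodyFrame_apply_zero, control.re_exp_mul_displacement hρ]
  · simp only [speed, start, bodyFrame_apply_one, control.im_exp_mul_displacement hρ]
  · simp only [turn, ddHeading, intervalIntegral.integral_same, add_zero]

lemma tauDD_bodyFrame (hρ : 0 < ρ) (p : Plane) (θ₀ : ℝ) (ζ : ℂ) :
    tauDD wmax ρ p θ₀ (bodyFrame p θ₀ ζ) = ddTime wmax ρ ζ := by
  refine congrArg sInf (Set.ext fun T => and_congr_right fun _ => ⟨?_, ?_⟩)
  · rintro ⟨x, y, θ, traj, hx₀, hy₀, rfl, hx, hy⟩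
    exact traj.ddReach hρ hx₀ hy₀ hx hy
  · rintro ⟨φ, reach⟩
    exact reach.exists_isDDTraj hρ p θ₀

lemma setIntegral_reachDD (hρ : 0 < ρ) (p : Plane) (θ₀ t : ℝ) :
    ∫ q in reachDD wmax ρ p θ₀ t, tauDD wmax ρ p θ₀ q =
      ∫ ζ in {ζ | ddTime wmax ρ ζ ≤ t}, ddTime wmax ρ ζ := by
  rw [← (measurePreserving_bodyFrame p θ₀).setIntegral_preimage_emb
    (bodyFrame p θ₀).toHomeomorph.measurableEmbedding]
  simp only [reachDD, Set.preimage_ofPred_eq, tauDD_bodyFrame hρ]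

end BodyFrame

theorem dd_travel_time_integral_lower_bound_general
    (wmax ρ : ℝ) (hw : 0 < wmax) (hρ : 0 < ρ) (p : Plane) (θ₀ : ℝ) :
    wmax ^ 3 / (3 * ρ) ≤
      Filter.liminf
        (fun t : ℝ =>
          (∫ q in reachDD wmax ρ p θ₀ t, tauDD wmax ρ p θ₀ q) / t ^ 4)
        (𝓝[>] 0) := by
  simp only [setIntegral_reachDD hρ]
  have lower_tendsto : Tendsto (fun t => wmax ^ 3 / (3 * (ρ + wmax * t))) (𝓝[>] 0)
      (𝓝 (wmax ^ 3 / (3 * ρ))) := by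
    have : ContinuousAt (fun t => wmax ^ 3 / (3 * (ρ + wmax * t))) 0 :=
      ContinuousAt.div (by fun_prop) (by fun_prop) (by simpa using hρ.ne')
    simpa [ContinuousAt] using this.tendsto.mono_left nhdsWithin_le_nhds
  rw [← lower_tendsto.liminf_eq]
  refine liminf_le_liminf ?_ lower_tendsto.isBoundedUnder_ge
    (IsBoundedUnder.isCoboundedUnder_ge ⟨4 * wmax ^ 3 / ρ, eventually_map.mpr ?_⟩)
  · filter_upwards [self_mem_nhdsWithin] with t (ht : 0 < t)
    rw [le_div_iff₀ (by positivity), div_mul_eq_mul_div]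
    exact le_setIntegral_sublevel_ddTime hw hρ ht.le
  · filter_upwards [self_mem_nhdsWithin] with t (ht : 0 < t)
    rw [div_le_iff₀ (by positivity), div_mul_eq_mul_div]
    exact setIntegral_sublevel_ddTime_le hw hρ ht.le

/-- small-time lower bound on the integral of the travel time over the
reachable set of a DD robot:
`liminf_{t→0⁺} (∫_{R_t(g)} τ_DD(g,q) dq) / t⁴ ≥ w_max³ / (6ρ)`. -/
theorem dd_travel_time_integral_lower_bound
    (wmax ρ : ℝ) (hw : 0 < wmax) (hρ : 0 < ρ) (p : Plane) (θ₀ : ℝ) :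
    wmax ^ 3 / (6 * ρ) ≤
      Filter.liminf
        (fun t : ℝ =>
          (∫ q in reachDD wmax ρ p θ₀ t, tauDD wmax ρ p θ₀ q) / t ^ 4)
        (𝓝[>] 0) :=
  (div_le_div_of_nonneg_left (by positivity) (by positivity) (by linarith)).trans
    (dd_travel_time_integral_lower_bound_general wmax ρ hw hρ p θ₀)
end
end
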